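/- arXiv:1810.12464 — 2 statements merged into one kernel-verified Lean document; each statement's English description precedes it below -/
import Mathlib

section
/- Let V and U be finite types, let α : U → ℝ satisfy α u ≥ 0 for all u, and let h : V → U → ℝ satisfy h a u ≥ 0 for all a, u. Then the set function f_α defined by f_α A = ∑_{u ∈ U} α u · log (1 + ∑_{a ∈ A} h a u) is submodular: for all finite sets A ⊆ B ⊆ V and every v ∉ B, f_α (A ∪ {v}) − f_α A ≥ f_α (B ∪ {v}) − f_α B. -/
/-- The SCMM function `f_α A = ∑ u, α u * log (1 + ∑ a ∈ A, h a u)`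
with nonnegative weights `α` and nonnegative features `h` is submodular. -/
theorem scmm_submodular
    {V U : Type*} [Fintype V] [DecidableEq V] [Fintype U]
    (α : U → ℝ) (hα : ∀ u, α u ≥ 0)
    (h : V → U → ℝ) (hh : ∀ a u, h a u ≥ 0)
    (fα : Finset V → ℝ)
    (hfα : ∀ A : Finset V,
      fα A = ∑ u : U, α u * Real.log (1 + ∑ a ∈ A, h a u)) :
    ∀ A B : Finset V, A ⊆ B → ∀ v ∉ B,
      fα (A ∪ {v}) - fα A ≥ fα (B ∪ {v}) - fα B := by
  intro A B hAB v hvB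
  have hvA : v ∉ A := fun hv => hvB (hAB hv)
  simp only [hfα, ge_iff_le, ← Finset.sum_sub_distrib, ← mul_sub]
  refine Finset.sum_le_sum fun u _ => mul_le_mul_of_nonneg_left ?_ (hα u)
  rw [Finset.sum_union (Finset.disjoint_singleton_right.2 hvA),
    Finset.sum_union (Finset.disjoint_singleton_right.2 hvB), Finset.sum_singleton]
  have h1 : ∑ a ∈ A, h a u ≤ ∑ a ∈ B, h a u :=
    Finset.sum_le_sum_of_subset_of_nonneg hAB fun a _ _ => hh a u
  have h0 : 0 ≤ ∑ a ∈ A, h a u := Finset.sum_nonneg fun a _ => hh a u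
  have hx : 0 ≤ h v u := hh v u
  generalize ∑ a ∈ A, h a u = p at *
  generalize ∑ a ∈ B, h a u = q at *
  generalize h v u = x at *
  rw [← Real.log_div (by linarith) (by linarith), ← Real.log_div (by linarith) (by linarith)]
  apply Real.log_le_log (div_pos (by linarith) (by linarith))
  rw [div_le_div_iff₀ (by linarith) (by linarith)]
  nlinarith [mul_nonneg hx (sub_nonneg.2 h1)]
end

section
/- Let V be a finite type, let k be a positive natural number with k ≤ |V|, and let f : Finset V → ℝ be a monotone nondecreasing submodular set function with f ∅ = 0. Let Â₀ = ∅ and for i = 0, …, k−1 let Â_{i+1} = Â_i ∪ {v_i}, where v_i is any element of V \ Â_i maximizing the marginal gain f (Â_i ∪ {v}) − f Â_i over v ∈ V \ Â_i (the forward greedy algorithm). Then the greedy output Â_k satisfies f Â_k ≥ (1 − (1 − 1/k)^k) · max { f A : A ⊆ V, |A| ≤ k }, and in particular f Â_k ≥ (1 − 1/e) · max { f A : A ⊆ V, |A| ≤ k }, where e is Euler's number. -/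
theorem greedy_union_bound {V : Type*} [DecidableEq V] (f : Finset V → ℝ)
    (hsub : ∀ A B : Finset V, A ⊆ B → ∀ v ∉ B,
      f (A ∪ {v}) - f A ≥ f (B ∪ {v}) - f B)
    (S : Finset V) (d : ℝ) (hd : 0 ≤ d)
    (hw : ∀ w ∉ S, f (S ∪ {w}) - f S ≤ d) (T : Finset V) :
    f (S ∪ T) - f S ≤ (T.card : ℝ) * d := by
  induction T using Finset.induction_on with
  | empty => simp
  | insert a T ha ih =>
    rw [Finset.card_insert_of_notMem ha]
    push_cast
    by_cases h : a ∈ S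
    · have e : S ∪ insert a T = S ∪ T := by
        ext x; simp only [Finset.mem_union, Finset.mem_insert]
        constructor
        · rintro (h1 | rfl | h1) <;> tauto
        · tauto
      rw [e]; linarith
    · have e : S ∪ insert a T = (S ∪ T) ∪ {a} := by
        ext x; simp only [Finset.mem_union, Finset.mem_insert, Finset.mem_singleton]
        tauto
      have h1 := hsub S (S ∪ T) Finset.subset_union_left a (by simp [h, ha])
      have h2 := hw a h
      rw [e]; linarith

/-- Nemhauser–Wolsey–Fisher guarantee for the forward greedy algorithm:
for a monotone nondecreasing submodular `f` with `f ∅ = 0`, the greedy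
solution after `k` steps is within a factor `1 - (1 - 1/k)^k ≥ 1 - 1/e`
of the optimum over all subsets of cardinality at most `k`. -/
theorem forward_greedy_guarantee
    {V : Type*} [Fintype V] [DecidableEq V]
    (k : ℕ) (hk : 0 < k) (hkV : k ≤ Fintype.card V)
    (f : Finset V → ℝ)
    (hmono : ∀ A B : Finset V, A ⊆ B → f A ≤ f B)
    (hsub : ∀ A B : Finset V, A ⊆ B → ∀ v ∉ B,
      f (A ∪ {v}) - f A ≥ f (B ∪ {v}) - f B)
    (hempty : f ∅ = 0)
    (Ahat : ℕ → Finset V)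
    (h0 : Ahat 0 = ∅)
    (hstep : ∀ i < k, ∃ v ∈ Finset.univ \ Ahat i,
      Ahat (i + 1) = Ahat i ∪ {v} ∧
      ∀ w ∈ Finset.univ \ Ahat i,
        f (Ahat i ∪ {v}) - f (Ahat i) ≥ f (Ahat i ∪ {w}) - f (Ahat i)) :
    f (Ahat k) ≥ (1 - (1 - 1 / (k : ℝ)) ^ k) *
      ((Finset.univ.powerset.filter (fun A : Finset V => A.card ≤ k)).sup'
        ⟨∅, by simp⟩ f) ∧
    f (Ahat k) ≥ (1 - 1 / Real.exp 1) *
      ((Finset.univ.powerset.filter (fun A : Finset V => A.card ≤ k)).sup'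
        ⟨∅, by simp⟩ f) := by
  obtain ⟨A, hA, hAe⟩ := Finset.exists_mem_eq_sup'
    (s := Finset.univ.powerset.filter (fun A : Finset V => A.card ≤ k)) ⟨∅, by simp⟩ f
  rw [hAe]
  have hAk : A.card ≤ k := (Finset.mem_filter.mp hA).2
  have hA0 : 0 ≤ f A := hempty ▸ hmono ∅ A (Finset.empty_subset A)
  have hk1 : (1 : ℝ) ≤ k := by exact_mod_cast hk
  have hk0 : (0 : ℝ) < k := by linarith
  have hr : 0 ≤ 1 - 1 / (k : ℝ) := by
    rw [sub_nonneg, div_le_one hk0]; exact hk1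
  have key : ∀ i ≤ k, f A - f (Ahat i) ≤ (1 - 1 / (k : ℝ)) ^ i * f A := by
    intro i
    induction i with
    | zero => intro _; simp [h0, hempty]
    | succ i ih =>
      intro hi
      have ih' := ih (by omega)
      obtain ⟨v, hv, he, hmax⟩ := hstep i (by omega)
      have hd : 0 ≤ f (Ahat i ∪ {v}) - f (Ahat i) :=
        sub_nonneg.mpr (hmono _ _ Finset.subset_union_left)
      have hb := greedy_union_bound f hsub (Ahat i) _ hd
        (fun w hw => hmax w (by simp [hw])) A
      have hm := hmono A (Ahat i ∪ A) Finset.subset_union_right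
      have hc : (A.card : ℝ) * (f (Ahat i ∪ {v}) - f (Ahat i))
          ≤ k * (f (Ahat i ∪ {v}) - f (Ahat i)) :=
        mul_le_mul_of_nonneg_right (by exact_mod_cast hAk) hd
      have hg : (f A - f (Ahat i)) / k ≤ f (Ahat i ∪ {v}) - f (Ahat i) := by
        rw [div_le_iff₀ hk0]; linarith
      rw [he]
      calc f A - f (Ahat i ∪ {v}) ≤ (f A - f (Ahat i)) - (f A - f (Ahat i)) / k := by linarith
        _ = (1 - 1 / (k : ℝ)) * (f A - f (Ahat i)) := by ring
        _ ≤ (1 - 1 / (k : ℝ)) * ((1 - 1 / (k : ℝ)) ^ i * f A) :=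
          mul_le_mul_of_nonneg_left ih' hr
        _ = _ := by ring
  have hfin := key k le_rfl
  have hexp : (1 - 1 / (k : ℝ)) ^ k ≤ 1 / Real.exp 1 := by
    have := Real.one_sub_div_pow_le_exp_neg (n := k) (t := 1) hk1
    rwa [Real.exp_neg, ← one_div] at this
  have h3 := mul_le_mul_of_nonneg_right hexp hA0
  constructor <;> linarith
end
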